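/- In the quotient disemigroup Disgp⟨X^{±1} ∪ {e} | S⟩, the following identifications hold for all m ≥ 0, n ≥ 0 and all x, z, x_{i_1}, …, x_{i_n}, x_{l_1}, …, x_{l_m} ∈ X: (1) the class of [x⁻¹e]_2 equals the class of [x⁻¹]_1; (2) the class of [e x_{i_1}···x_{i_n} x⁻¹]_1 equals the class of [x_{i_1}···x_{i_n} x⁻¹]_{n+1}; (3) the class of [xe]_2 equals the class of [ex]_1; (4) the class of [x⁻¹ x_{l_1}···x_{l_m} z⁻¹]_{m+2} equals the class of [x⁻¹ x_{l_1}···x_{l_m} z⁻¹]_1. Consequently ρ(S) = ρ(S ∪ T), where T is the set of these relations. -/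

import Mathlib

/-- The alphabet X^{±1} ∪ {e}: letters x, x⁻¹ (for x ∈ X) and the symbol e. -/
inductive Letter (X : Type*) : Type _
  | pos : X → Letter X
  | neg : X → Letter X
  | e   : Letter X

/-- The free disemigroup on Y: an element [u]_m (u a nonempty word, 1 ≤ m ≤ |u|)
is encoded as the triple (prefix before the center, center letter, suffix),
so `⟨p, c, s⟩` stands for `[p·c·s]_{|p|+1}`. -/
structure FD (Y : Type*) where
  pre : List Y
  cen : Y
  suf : List Y

namespace FD

/-- [u]_m ⊢ [v]_n = [uv]_{|u|+n}. -/
def vd {Y : Type*} (a b : FD Y) : FD Y :=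
  ⟨a.pre ++ a.cen :: (a.suf ++ b.pre), b.cen, b.suf⟩

/-- [u]_m ⊣ [v]_n = [uv]_m. -/
def dv {Y : Type*} (a b : FD Y) : FD Y :=
  ⟨a.pre, a.cen, a.suf ++ b.pre ++ b.cen :: b.suf⟩

/-- The underlying associative word of [u]_m. -/
def word {Y : Type*} (a : FD Y) : List Y := a.pre ++ a.cen :: a.suf

end FD

/-- The congruence ρ(r) on the free disemigroup generated by a set of relations r:
the smallest equivalence relation containing r compatible with ⊢ and ⊣. -/
inductive DCongr {Y : Type*} (r : FD Y → FD Y → Prop) : FD Y → FD Y → Prop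
  | of {a b : FD Y} : r a b → DCongr r a b
  | refl (a : FD Y) : DCongr r a a
  | symm {a b : FD Y} : DCongr r a b → DCongr r b a
  | trans {a b c : FD Y} : DCongr r a b → DCongr r b c → DCongr r a c
  | vd {a b c d : FD Y} : DCongr r a b → DCongr r c d → DCongr r (a.vd c) (b.vd d)
  | dv {a b c d : FD Y} : DCongr r a b → DCongr r c d → DCongr r (a.dv c) (b.dv d)

/-- The defining relations S of the free digroup:
[xx⁻¹]₂ = [e]₁, [x⁻¹x]₁ = [e]₁, [ye]₁ = [y]₁, [ey]₂ = [y]₁. -/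
def rel (X : Type*) : FD (Letter X) → FD (Letter X) → Prop := fun a b =>
  (∃ x : X, a = ⟨[Letter.pos x], Letter.neg x, []⟩ ∧ b = ⟨[], Letter.e, []⟩) ∨
  (∃ x : X, a = ⟨[], Letter.neg x, [Letter.pos x]⟩ ∧ b = ⟨[], Letter.e, []⟩) ∨
  (∃ y : Letter X, a = ⟨[], y, [Letter.e]⟩ ∧ b = ⟨[], y, []⟩) ∨
  (∃ y : Letter X, a = ⟨[Letter.e], y, []⟩ ∧ b = ⟨[], y, []⟩)

/-- The quotient disemigroup Disgp⟨X^{±1} ∪ {e} | S⟩. -/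
def DQ (X : Type*) := Quot (DCongr (rel X))

/-- The class of an element of the free disemigroup in the quotient. -/
def cls {X : Type*} (a : FD (Letter X)) : DQ X := Quot.mk _ a

/-- The operation ⊢ on the quotient. -/
def DQ.vd {X : Type*} : DQ X → DQ X → DQ X :=
  Quot.map₂ FD.vd (fun a _ _ h => DCongr.vd (DCongr.refl a) h)
    (fun _ _ b h => DCongr.vd h (DCongr.refl b))

/-- The operation ⊣ on the quotient. -/
def DQ.dv {X : Type*} : DQ X → DQ X → DQ X :=
  Quot.map₂ FD.dv (fun a _ _ h => DCongr.dv (DCongr.refl a) h)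
    (fun _ _ b h => DCongr.dv h (DCongr.refl b))

/-- The class of [e]₁, the unit of the free digroup. -/
def unitE (X : Type*) : DQ X := cls ⟨[], Letter.e, []⟩

/-- Words over X^{±1} are lists of pairs (x, b), where (x, true) is x and
(x, false) is x⁻¹, as for `FreeGroup`. This converts such a pair to a `Letter`. -/
def pm {X : Type*} (p : X × Bool) : Letter X :=
  if p.2 then Letter.pos p.1 else Letter.neg p.1

/-- A word over X^{±1} is reduced (lies in gp⟨X⟩) if it has no adjacent pair
of mutually inverse letters. -/
def Reduced {X : Type*} (L : List (X × Bool)) : Prop :=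
  List.Chain' (fun a b => ¬(a.1 = b.1 ∧ a.2 = !b.2)) L

/-- Delete all occurrences of e from a word over X^{±1} ∪ {e} (the map τ). -/
def strip {X : Type*} (L : List (Letter X)) : List (X × Bool) :=
  L.flatMap fun l => match l with
    | Letter.pos x => [(x, true)]
    | Letter.neg x => [(x, false)]
    | Letter.e => []

/-- ŵ: the reduced word of w, obtained by deleting the e's and freely reducing. -/
noncomputable def hat {X : Type*} (L : List (Letter X)) : List (X × Bool) :=
  letI := Classical.decEq X
  FreeGroup.reduce (strip L)

/-- λ(w): the (1-based) position of the first letter of w lying in X⁻¹. -/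
def lam {X : Type*} (L : List (X × Bool)) : ℕ := L.findIdx (fun p => !p.2) + 1

/-- The element [L]_m of the free disemigroup determined by a word L over X^{±1}
and a center position m. -/
def toNF {X : Type*} (L : List (X × Bool)) (m : ℕ) : FD (Letter X) :=
  ⟨(L.take (m - 1)).map pm, ((L[m-1]?).map pm).getD Letter.e, (L.drop m).map pm⟩

/-- Ω_e = {[eu]₁ : u ∈ X*}. -/
def OmegaE (X : Type*) : Set (FD (Letter X)) :=
  {a | ∃ u : List X, a = ⟨[], Letter.e, u.map Letter.pos⟩}

/-- Ω_X = {[uxv]_{|u|+1} : x ∈ X, u, v ∈ gp⟨X⟩}. -/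
def OmegaX (X : Type*) : Set (FD (Letter X)) :=
  {a | ∃ (x : X) (u v : List (X × Bool)), Reduced u ∧ Reduced v ∧
    a = ⟨u.map pm, Letter.pos x, v.map pm⟩}

/-- Ω_{X⁻¹} = {[ux⁻¹v]_{|u|+1} : x ∈ X, u ∈ X*, v ∈ (X^{±1})*, ux⁻¹v reduced}. -/
def OmegaInv (X : Type*) : Set (FD (Letter X)) :=
  {a | ∃ (x : X) (u : List X) (v : List (X × Bool)),
    Reduced ((u.map fun y => (y, true)) ++ (x, false) :: v) ∧
    a = ⟨u.map Letter.pos, Letter.neg x, v.map pm⟩}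

/-- Inversion of a single letter. -/
def linv {X : Type*} : Letter X → Letter X
  | Letter.pos x => Letter.neg x
  | Letter.neg x => Letter.pos x
  | Letter.e => Letter.e

/-- The formal inverse w⁻¹ of a word over X^{±1}. -/
def invw {X : Type*} (L : List (X × Bool)) : List (X × Bool) :=
  L.reverse.map fun p => (p.1, !p.2)

/-- The extra relations T: t₁ = ([x⁻¹e]₂, [x⁻¹]₁),
t₂ = ([e x_{i₁}···x_{i_n} x⁻¹]₁, [x_{i₁}···x_{i_n} x⁻¹]_{n+1}),
t₃ = ([xe]₂, [ex]₁),
t₄ = ([x⁻¹ x_{l₁}···x_{l_m} z⁻¹]_{m+2}, [x⁻¹ x_{l₁}···x_{l_m} z⁻¹]₁). -/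
def relT (X : Type*) : FD (Letter X) → FD (Letter X) → Prop := fun a b =>
  (∃ x : X, a = ⟨[Letter.neg x], Letter.e, []⟩ ∧ b = ⟨[], Letter.neg x, []⟩) ∨
  (∃ (x : X) (l : List X),
    a = ⟨[], Letter.e, l.map Letter.pos ++ [Letter.neg x]⟩ ∧
    b = ⟨l.map Letter.pos, Letter.neg x, []⟩) ∨
  (∃ x : X, a = ⟨[Letter.pos x], Letter.e, []⟩ ∧ b = ⟨[], Letter.e, [Letter.pos x]⟩) ∨
  (∃ (x z : X) (l : List X),
    a = ⟨Letter.neg x :: l.map Letter.pos, Letter.neg z, []⟩ ∧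
    b = ⟨[], Letter.neg x, l.map Letter.pos ++ [Letter.neg z]⟩)

/-!
In a disemigroup, let `a ⊢ b = e = b ⊣ a` and `e ⊢ b = b = b ⊣ e`. Expanding `e` inside a product
shows that `a ⊢ e = e ⊣ a` and that `b` is fixed both by `· ⊢ e` and by `e ⊣ ·`. Hence every letter
`y` satisfies `y ⊢ e = e ⊣ y`, so the elements fixed by `e ⊣ ·` are stable under `y ⊢ ·`, and among
them are all words centered at a final `x⁻¹`. This is the second family, for words over the whole
alphabet. The fourth holds because `c ⊢ d = c ⊣ d` as soon as `c ⊢ e = c` and `e ⊣ d = d`.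
-/

/-- A disemigroup (Loday's dimonoid), with `vd` for `⊢` and `dv` for `⊣`, so that the equational
arguments can be run in `DQ X`. The two `bar` axioms say that a factor not containing the center of
the product may be formed with either operation. -/
class Disemigroup (D : Type*) where
  vd : D → D → D
  dv : D → D → D
  vd_assoc (a b c : D) : vd (vd a b) c = vd a (vd b c)
  dv_assoc (a b c : D) : dv (dv a b) c = dv a (dv b c)
  vd_dv_assoc (a b c : D) : dv (vd a b) c = vd a (dv b c)
  vd_bar (a b c : D) : vd (dv a b) c = vd (vd a b) c
  dv_bar (a b c : D) : dv a (vd b c) = dv a (dv b c)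

local infixl:70 " ⊢ᵈ " => Disemigroup.vd
local infixl:70 " ⊣ᵈ " => Disemigroup.dv

namespace Disemigroup

variable {D : Type*} [Disemigroup D] {a b e : D}

lemma vd_unit_eq_unit_dv (hab : a ⊢ᵈ b = e) (hba : b ⊣ᵈ a = e) : a ⊢ᵈ e = e ⊣ᵈ a :=
  calc a ⊢ᵈ e = a ⊢ᵈ (b ⊣ᵈ a) := by rw [hba]
    _ = (a ⊢ᵈ b) ⊣ᵈ a := (vd_dv_assoc a b a).symm
    _ = e ⊣ᵈ a := by rw [hab]

lemma inv_vd_unit (hab : a ⊢ᵈ b = e) (hba : b ⊣ᵈ a = e) (hb : e ⊢ᵈ b = b) : b ⊢ᵈ e = b :=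
  calc b ⊢ᵈ e = b ⊢ᵈ (a ⊢ᵈ b) := by rw [hab]
    _ = (b ⊣ᵈ a) ⊢ᵈ b := by rw [vd_bar, vd_assoc]
    _ = b := by rw [hba, hb]

lemma unit_dv_inv (hab : a ⊢ᵈ b = e) (hba : b ⊣ᵈ a = e) (hb : b ⊣ᵈ e = b) : e ⊣ᵈ b = b :=
  calc e ⊣ᵈ b = (b ⊣ᵈ a) ⊣ᵈ b := by rw [hba]
    _ = b ⊣ᵈ (a ⊢ᵈ b) := by rw [dv_bar, dv_assoc]
    _ = b := by rw [hab, hb]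

lemma unit_dv_vd (ha : a ⊢ᵈ e = e ⊣ᵈ a) (hb : e ⊣ᵈ b = b) : e ⊣ᵈ (a ⊢ᵈ b) = a ⊢ᵈ b :=
  calc e ⊣ᵈ (a ⊢ᵈ b) = (e ⊣ᵈ a) ⊣ᵈ b := by rw [dv_bar, dv_assoc]
    _ = a ⊢ᵈ (e ⊣ᵈ b) := by rw [← ha, vd_dv_assoc]
    _ = a ⊢ᵈ b := by rw [hb]

lemma vd_eq_dv_of_unit (ha : a ⊢ᵈ e = a) (hb : e ⊣ᵈ b = b) : a ⊢ᵈ b = a ⊣ᵈ b :=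
  calc a ⊢ᵈ b = (a ⊢ᵈ e) ⊣ᵈ b := by rw [vd_dv_assoc, hb]
    _ = a ⊣ᵈ b := by rw [ha]

end Disemigroup

open Disemigroup

instance FD.instDisemigroup (Y : Type*) : Disemigroup (FD Y) where
  vd := FD.vd
  dv := FD.dv
  vd_assoc _ _ _ := by simp [FD.vd]
  dv_assoc _ _ _ := by simp [FD.dv]
  vd_dv_assoc _ _ _ := by simp [FD.vd, FD.dv]
  vd_bar _ _ _ := by simp [FD.vd, FD.dv]
  dv_bar _ _ _ := by simp [FD.vd, FD.dv]

instance DQ.instDisemigroup (X : Type*) : Disemigroup (DQ X) where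
  vd := DQ.vd
  dv := DQ.dv
  vd_assoc := by
    rintro ⟨a⟩ ⟨b⟩ ⟨c⟩
    exact congrArg cls (vd_assoc a b c)
  dv_assoc := by
    rintro ⟨a⟩ ⟨b⟩ ⟨c⟩
    exact congrArg cls (dv_assoc a b c)
  vd_dv_assoc := by
    rintro ⟨a⟩ ⟨b⟩ ⟨c⟩
    exact congrArg cls (vd_dv_assoc a b c)
  vd_bar := by
    rintro ⟨a⟩ ⟨b⟩ ⟨c⟩
    exact congrArg cls (vd_bar a b c)
  dv_bar := by
    rintro ⟨a⟩ ⟨b⟩ ⟨c⟩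
    exact congrArg cls (dv_bar a b c)

namespace DCongr

variable {Y : Type*} {r s : FD Y → FD Y → Prop}

lemma equivalence (r : FD Y → FD Y → Prop) : Equivalence (DCongr r) :=
  ⟨.refl, .symm, .trans⟩

lemma of_le (hrs : ∀ a b, r a b → DCongr s a b) {a b : FD Y} (h : DCongr r a b) :
    DCongr s a b := by
  induction h with
  | of h => exact hrs _ _ h
  | refl a => exact .refl a
  | symm _ ih => exact ih.symm
  | trans _ _ ih₁ ih₂ => exact ih₁.trans ih₂
  | vd _ _ ih₁ ih₂ => exact .vd ih₁ ih₂
  | dv _ _ ih₁ ih₂ => exact .dv ih₁ ih₂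

lemma iff_or_of_le (hsr : ∀ a b, s a b → DCongr r a b) (a b : FD Y) :
    DCongr r a b ↔ DCongr (fun a b => r a b ∨ s a b) a b :=
  ⟨of_le fun _ _ h => .of (.inl h), of_le fun a b h => h.elim .of (hsr a b)⟩

end DCongr

section FreeDigroup

open Letter

variable {X : Type*}

/-- The class of the one-letter word `[y]₁`; the relations `S` become identities between products
of these classes. -/
def clsLetter (y : Letter X) : DQ X := cls ⟨[], y, []⟩

lemma cls_eq_iff {a b : FD (Letter X)} : cls a = cls b ↔ DCongr (rel X) a b :=
  (DCongr.equivalence (rel X)).quot_mk_eq_iff a b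

lemma clsLetter_pos_vd_neg (x : X) : clsLetter (pos x) ⊢ᵈ clsLetter (neg x) = unitE X :=
  cls_eq_iff.2 (.of (.inl ⟨x, rfl, rfl⟩))

lemma clsLetter_neg_dv_pos (x : X) : clsLetter (neg x) ⊣ᵈ clsLetter (pos x) = unitE X :=
  cls_eq_iff.2 (.of (.inr (.inl ⟨x, rfl, rfl⟩)))

lemma clsLetter_dv_unitE (y : Letter X) : clsLetter y ⊣ᵈ unitE X = clsLetter y :=
  cls_eq_iff.2 (.of (.inr (.inr (.inl ⟨y, rfl, rfl⟩))))

lemma unitE_vd_clsLetter (y : Letter X) : unitE X ⊢ᵈ clsLetter y = clsLetter y :=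
  cls_eq_iff.2 (.of (.inr (.inr (.inr ⟨y, rfl, rfl⟩))))

lemma clsLetter_neg_vd_unitE (x : X) : clsLetter (neg x) ⊢ᵈ unitE X = clsLetter (neg x) :=
  inv_vd_unit (clsLetter_pos_vd_neg x) (clsLetter_neg_dv_pos x) (unitE_vd_clsLetter (neg x))

lemma unitE_dv_clsLetter_neg (x : X) : unitE X ⊣ᵈ clsLetter (neg x) = clsLetter (neg x) :=
  unit_dv_inv (clsLetter_pos_vd_neg x) (clsLetter_neg_dv_pos x) (clsLetter_dv_unitE (neg x))

lemma clsLetter_vd_unitE (y : Letter X) : clsLetter y ⊢ᵈ unitE X = unitE X ⊣ᵈ clsLetter y := by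
  cases y with
  | pos x => exact vd_unit_eq_unit_dv (clsLetter_pos_vd_neg x) (clsLetter_neg_dv_pos x)
  | neg x => rw [clsLetter_neg_vd_unitE, unitE_dv_clsLetter_neg]
  | e => exact (unitE_vd_clsLetter e).trans (clsLetter_dv_unitE e).symm

lemma unitE_dv_cls_neg (w : List (Letter X)) (x : X) :
    unitE X ⊣ᵈ cls ⟨w, neg x, []⟩ = cls ⟨w, neg x, []⟩ := by
  induction w with
  | nil => exact unitE_dv_clsLetter_neg x
  | cons y w ih => exact unit_dv_vd (clsLetter_vd_unitE y) ih

lemma clsLetter_neg_vd_eq_dv (x z : X) (w : List (Letter X)) :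
    clsLetter (neg x) ⊢ᵈ cls ⟨w, neg z, []⟩ = clsLetter (neg x) ⊣ᵈ cls ⟨w, neg z, []⟩ :=
  vd_eq_dv_of_unit (clsLetter_neg_vd_unitE x) (unitE_dv_cls_neg w z)

lemma cls_eq_of_relT {a b : FD (Letter X)} (h : relT X a b) : cls a = cls b := by
  rcases h with ⟨x, rfl, rfl⟩ | ⟨x, l, rfl, rfl⟩ | ⟨x, rfl, rfl⟩ | ⟨x, z, l, rfl, rfl⟩
  · exact clsLetter_neg_vd_unitE x
  · exact unitE_dv_cls_neg (l.map pos) x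
  · exact clsLetter_vd_unitE (pos x)
  · exact clsLetter_neg_vd_eq_dv x z (l.map pos)

end FreeDigroup

theorem relT_holds_and_congr_eq_general (X : Type*) :
    (∀ x : X, cls ⟨[Letter.neg x], Letter.e, []⟩ = cls ⟨[], Letter.neg x, []⟩) ∧
    (∀ (x : X) (w : List (Letter X)),
      cls ⟨[], Letter.e, w ++ [Letter.neg x]⟩ = cls ⟨w, Letter.neg x, []⟩) ∧
    (∀ y : Letter X, cls ⟨[y], Letter.e, []⟩ = cls ⟨[], Letter.e, [y]⟩) ∧
    (∀ (x z : X) (w : List (Letter X)),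
      cls ⟨Letter.neg x :: w, Letter.neg z, []⟩ =
        cls ⟨[], Letter.neg x, w ++ [Letter.neg z]⟩) ∧
    (∀ a b : FD (Letter X),
      DCongr (rel X) a b ↔ DCongr (fun a b => rel X a b ∨ relT X a b) a b) :=
  ⟨clsLetter_neg_vd_unitE, fun x w => unitE_dv_cls_neg w x, clsLetter_vd_unitE,
    clsLetter_neg_vd_eq_dv, DCongr.iff_or_of_le fun _ _ h => cls_eq_iff.1 (cls_eq_of_relT h)⟩

/-- In Disgp⟨X^{±1} ∪ {e} | S⟩ the four families of identifications T hold,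
and consequently ρ(S) = ρ(S ∪ T). -/
theorem relT_holds_and_congr_eq (X : Type*) :
    (∀ x : X, cls ⟨[Letter.neg x], Letter.e, []⟩ = cls ⟨[], Letter.neg x, []⟩) ∧
    (∀ (x : X) (l : List X),
      cls ⟨[], Letter.e, l.map Letter.pos ++ [Letter.neg x]⟩ =
        cls ⟨l.map Letter.pos, Letter.neg x, []⟩) ∧
    (∀ x : X, cls ⟨[Letter.pos x], Letter.e, []⟩ = cls ⟨[], Letter.e, [Letter.pos x]⟩) ∧
    (∀ (x z : X) (l : List X),
      cls ⟨Letter.neg x :: l.map Letter.pos, Letter.neg z, []⟩ =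
        cls ⟨[], Letter.neg x, l.map Letter.pos ++ [Letter.neg z]⟩) ∧
    (∀ a b : FD (Letter X),
      DCongr (rel X) a b ↔ DCongr (fun a b => rel X a b ∨ relT X a b) a b) :=
  let ⟨t₁, t₂, t₃, t₄, hρ⟩ := relT_holds_and_congr_eq_general X
  ⟨t₁, fun x l => t₂ x (l.map .pos), fun x => t₃ (.pos x), fun x z l => t₄ x z (l.map .pos), hρ⟩
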